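/- Let N ≥ 3 and let u be a continuously differentiable function on the closed unit ball B̄ ⊂ ℝ^N that is radially symmetric (u(x) depends only on |x|) and vanishes on the boundary sphere ∂B. Then for every x ∈ B̄ with x ≠ 0, |u(x)| ≤ (∫_B |∇u(y)|² dy)^{1/2} / ( (ω_N (N-2))^{1/2} · |x|^{(N-2)/2} ), where ω_N = N · vol(B) is the surface area of the unit sphere in ℝ^N. -/

import Mathlib

open MeasureTheory Metric Set Filter

noncomputable section

abbrev E (N : ℕ) := EuclideanSpace ℝ (Fin N)

/-- The Laplacian: sum of pure second partial derivatives. -/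
def lap {N : ℕ} (u : E N → ℝ) (x : E N) : ℝ :=
  ∑ i, fderiv ℝ (fun y => fderiv ℝ u y (EuclideanSpace.single i 1)) x (EuclideanSpace.single i 1)

/-!
Let `n = dim F` and let `w t = u (t • e)` be the profile of `u` along the unit vector
`e = x / ‖x‖`, so that `‖u x‖ = ‖w R - w ρ‖ ≤ ∫ t in ρ..R, ‖w' t‖` with `ρ = ‖x‖`. By the
Cauchy–Schwarz inequality with weight `t ^ (n - 1)`, the square of this integral is at most
`∫ t in ρ..∞, t ^ (1 - n) = ρ ^ (2 - n) / (n - 2)` times `∫ t in 0..R, t ^ (n - 1) * ‖w' t‖ ^ 2`.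
Radial symmetry gives `‖w' ‖y‖‖ ≤ ‖Du(y)‖`, so in polar coordinates the last integral times the
surface constant `n * μ (ball 0 1)` is at most `∫ ‖Du‖ ^ 2`.
-/

open Module

section WeightedCauchySchwarz

variable {α : Type*} [MeasurableSpace α] {μ : Measure α} {f w : α → ℝ}

lemma integrable_of_integrable_inv_of_integrable_mul_sq (hf : AEStronglyMeasurable f μ)
    (hw : ∀ᵐ a ∂μ, 0 < w a) (hw_inv : Integrable (fun a ↦ (w a)⁻¹) μ)
    (hwf : Integrable (fun a ↦ w a * f a ^ 2) μ) : Integrable f μ := by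
  refine (hw_inv.add hwf).mono' hf ?_
  filter_upwards [hw] with a ha
  have complete_square : (w a)⁻¹ + w a * f a ^ 2 - 2 * |f a| = w a * (|f a| - (w a)⁻¹) ^ 2 := by
    rw [← sq_abs (f a)]
    field_simp
    ring
  have square_nonneg : 0 ≤ w a * (|f a| - (w a)⁻¹) ^ 2 := by positivity
  simp only [Pi.add_apply, Real.norm_eq_abs]
  linarith [abs_nonneg (f a)]

lemma sq_integral_le_integral_inv_mul_integral_mul_sq (hf : AEStronglyMeasurable f μ)
    (hw : ∀ᵐ a ∂μ, 0 < w a) (hw_inv : Integrable (fun a ↦ (w a)⁻¹) μ)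
    (hwf : Integrable (fun a ↦ w a * f a ^ 2) μ) :
    (∫ a, f a ∂μ) ^ 2 ≤ (∫ a, (w a)⁻¹ ∂μ) * ∫ a, w a * f a ^ 2 ∂μ := by
  have hf_int := integrable_of_integrable_inv_of_integrable_mul_sq hf hw hw_inv hwf
  have quadratic_nonneg (l : ℝ) :
      0 ≤ (∫ a, (w a)⁻¹ ∂μ) * (l * l) + (-2 * ∫ a, f a ∂μ) * l + ∫ a, w a * f a ^ 2 ∂μ := by
    calc
      0 ≤ ∫ a, (w a)⁻¹ * (l * l) + f a * (-2 * l) + w a * f a ^ 2 ∂μ := by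
        refine integral_nonneg_of_ae ?_
        filter_upwards [hw] with a ha
        have complete_square : (w a)⁻¹ * (l * l) + f a * (-2 * l) + w a * f a ^ 2 =
            w a * (f a - l * (w a)⁻¹) ^ 2 := by
          field_simp
          ring
        rw [complete_square]
        positivity
      _ = _ := by
        have linear_int : Integrable (fun a ↦ (w a)⁻¹ * (l * l) + f a * (-2 * l)) μ :=
          (hw_inv.mul_const _).add (hf_int.mul_const _)
        rw [integral_add linear_int hwf, integral_add (hw_inv.mul_const _) (hf_int.mul_const _),
          integral_mul_const, integral_mul_const]
        ring
  have discrim_nonpos := discrim_le_zero quadratic_nonneg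
  rw [discrim] at discrim_nonpos
  linarith

end WeightedCauchySchwarz

section HalfLine

variable {p ρ R : ℝ}

lemma integrableOn_Ioi_inv_rpow (hp : 1 < p) (hρ : 0 < ρ) :
    IntegrableOn (fun r : ℝ ↦ (r ^ p)⁻¹) (Ioi ρ) :=
  (integrableOn_Ioi_rpow_of_lt (neg_lt_neg hp) hρ).congr_fun
    (fun _ hr ↦ Real.rpow_neg (hρ.trans hr).le p) measurableSet_Ioi

lemma integral_Ioi_inv_rpow (hp : 1 < p) (hρ : 0 < ρ) :
    ∫ r in Ioi ρ, (r ^ p)⁻¹ = ((p - 1) * ρ ^ (p - 1))⁻¹ := by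
  calc
    ∫ r in Ioi ρ, (r ^ p)⁻¹ = ∫ r in Ioi ρ, r ^ (-p) :=
      setIntegral_congr_fun measurableSet_Ioi fun _ hr ↦ (Real.rpow_neg (hρ.trans hr).le p).symm
    _ = -ρ ^ (-(p - 1)) / -(p - 1) := by
      rw [integral_Ioi_rpow_of_lt (neg_lt_neg hp) hρ, neg_sub, neg_add_eq_sub]
    _ = ((p - 1) * ρ ^ (p - 1))⁻¹ := by
      rw [neg_div_neg_eq, Real.rpow_neg hρ.le, mul_inv, div_eq_inv_mul]

lemma mul_rpow_mul_sq_norm_le_integral_rpow_mul_sq_norm_deriv {G : Type*} [NormedAddCommGroup G]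
    [NormedSpace ℝ G] [CompleteSpace G] {w : ℝ → G} (hp : 1 < p) (hρ : 0 < ρ) (hρR : ρ ≤ R)
    (hcont : ContinuousOn w (Icc ρ R)) (hdiff : DifferentiableOn ℝ w (Ioo ρ R)) (hR : w R = 0)
    (h_int : IntegrableOn (fun r ↦ r ^ p * ‖deriv w r‖ ^ 2) (Ioo ρ R)) :
    (p - 1) * ρ ^ (p - 1) * ‖w ρ‖ ^ 2 ≤ ∫ r in Ioo ρ R, r ^ p * ‖deriv w r‖ ^ 2 := by
  have hmeas : AEStronglyMeasurable (fun r ↦ ‖deriv w r‖) (volume.restrict (Ioo ρ R)) :=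
    (aestronglyMeasurable_deriv w _).norm
  have weight_pos : ∀ᵐ r ∂volume.restrict (Ioo ρ R), 0 < r ^ p := by
    filter_upwards [ae_restrict_mem measurableSet_Ioo] with r hr
    exact Real.rpow_pos_of_pos (hρ.trans hr.1) p
  have hinv := integrableOn_Ioi_inv_rpow hp hρ
  have hinv_Ioo : IntegrableOn (fun r : ℝ ↦ (r ^ p)⁻¹) (Ioo ρ R) :=
    hinv.mono_set Ioo_subset_Ioi_self
  have hderiv : IntegrableOn (fun r ↦ ‖deriv w r‖) (Ioo ρ R) :=
    integrable_of_integrable_inv_of_integrable_mul_sq hmeas weight_pos hinv_Ioo h_int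
  have norm_le : ‖w ρ‖ ≤ ∫ r in Ioo ρ R, ‖deriv w r‖ := by
    have h := norm_sub_le_integral_of_norm_deriv_le_of_le hρR hcont hdiff
      (ae_of_all _ fun r _ ↦ le_rfl) ((intervalIntegrable_iff_integrableOn_Ioo_of_le hρR).2 hderiv)
    rwa [hR, zero_sub, norm_neg, intervalIntegral.integral_of_le hρR,
      integral_Ioc_eq_integral_Ioo] at h
  have weight_integral_le :
      ∫ r in Ioo ρ R, (r ^ p)⁻¹ ≤ ((p - 1) * ρ ^ (p - 1))⁻¹ := by
    rw [← integral_Ioi_inv_rpow hp hρ]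
    refine setIntegral_mono_set hinv ?_ Ioo_subset_Ioi_self.eventuallyLE
    filter_upwards [ae_restrict_mem measurableSet_Ioi] with r hr
    exact inv_nonneg.2 (Real.rpow_nonneg (hρ.trans hr).le p)
  have energy_nonneg : 0 ≤ ∫ r in Ioo ρ R, r ^ p * ‖deriv w r‖ ^ 2 :=
    integral_nonneg_of_ae (weight_pos.mono fun r hr ↦ by positivity)
  have const_pos : 0 < (p - 1) * ρ ^ (p - 1) :=
    mul_pos (sub_pos.2 hp) (Real.rpow_pos_of_pos hρ _)
  rw [← le_inv_mul_iff₀ const_pos]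
  calc
    ‖w ρ‖ ^ 2 ≤ (∫ r in Ioo ρ R, ‖deriv w r‖) ^ 2 := by gcongr
    _ ≤ (∫ r in Ioo ρ R, (r ^ p)⁻¹) * ∫ r in Ioo ρ R, r ^ p * ‖deriv w r‖ ^ 2 :=
      sq_integral_le_integral_inv_mul_integral_mul_sq hmeas weight_pos hinv_Ioo h_int
    _ ≤ _ := by gcongr

end HalfLine

section Radial

/-- Radial symmetry on a set `s`: on `s` the function depends only on the norm of its argument.
Its values outside `s` are irrelevant. -/
def IsRadialOn {F G : Type*} [Norm F] (u : F → G) (s : Set F) : Prop :=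
  ∀ ⦃x⦄, x ∈ s → ∀ ⦃y⦄, y ∈ s → ‖x‖ = ‖y‖ → u x = u y

/-- The profile of `u` along the line `ℝ e`. For a unit vector `e` and a radial `u` it represents
`u` as a function of the radius. -/
def radialProfile {F G : Type*} [SMul ℝ F] (u : F → G) (e : F) (t : ℝ) : G := u (t • e)

variable {F G : Type*} [NormedAddCommGroup F] [NormedSpace ℝ F] {e f y : F} {R t : ℝ}

lemma norm_smul_of_norm_eq_one (he : ‖e‖ = 1) : ‖t • e‖ = |t| := by
  rw [norm_smul, he, mul_one, Real.norm_eq_abs]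

lemma continuousOn_radialProfile [TopologicalSpace G] {u : F → G}
    (hu : ContinuousOn u (closedBall 0 R)) (he : ‖e‖ = 1) :
    ContinuousOn (radialProfile u e) (Icc (-R) R) :=
  hu.comp (by fun_prop) fun t ht ↦ by
    rw [mem_closedBall_zero_iff, norm_smul_of_norm_eq_one he]
    exact abs_le.2 ht

variable [NormedAddCommGroup G] [NormedSpace ℝ G] {u : F → G}

lemma hasDerivAt_radialProfile (hu : DifferentiableAt ℝ u (t • e)) :
    HasDerivAt (radialProfile u e) (fderiv ℝ u (t • e) e) t :=
  hu.hasFDerivAt.comp_hasDerivAt t (by simpa using (hasDerivAt_id t).smul_const e)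

lemma differentiableOn_radialProfile (hu : DifferentiableOn ℝ u (ball 0 R)) (he : ‖e‖ = 1) :
    DifferentiableOn ℝ (radialProfile u e) (Ioo (-R) R) :=
  hu.comp (by fun_prop) fun t ht ↦ by
    rw [mem_ball_zero_iff, norm_smul_of_norm_eq_one he]
    exact abs_lt.2 ht

namespace IsRadialOn

lemma deriv_radialProfile_eq (hu : IsRadialOn u (ball 0 R)) (he : ‖e‖ = 1) (hf : ‖f‖ = 1)
    (ht : |t| < R) : deriv (radialProfile u e) t = deriv (radialProfile u f) t := by
  refine Filter.EventuallyEq.deriv_eq ?_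
  filter_upwards [continuous_abs.continuousAt.eventually_lt_const ht] with s hs
  have norm_e := norm_smul_of_norm_eq_one (t := s) he
  have norm_f := norm_smul_of_norm_eq_one (t := s) hf
  exact hu (mem_ball_zero_iff.2 (norm_e.trans_lt hs)) (mem_ball_zero_iff.2 (norm_f.trans_lt hs))
    (norm_e.trans norm_f.symm)

lemma norm_deriv_radialProfile_le (hu : IsRadialOn u (ball 0 R))
    (hdiff : DifferentiableOn ℝ u (ball 0 R)) (he : ‖e‖ = 1) (hy : y ∈ ball 0 R) :
    ‖deriv (radialProfile u e) ‖y‖‖ ≤ ‖fderiv ℝ u y‖ := by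
  obtain ⟨f, hf, hfy⟩ : ∃ f : F, ‖f‖ = 1 ∧ ‖y‖ • f = y := by
    rcases eq_or_ne y 0 with rfl | hy0
    · exact ⟨e, he, by simp⟩
    · exact ⟨‖y‖⁻¹ • y, norm_smul_inv_norm (𝕜 := ℝ) hy0,
        smul_inv_smul₀ (norm_ne_zero_iff.2 hy0) y⟩
  have hderiv := hasDerivAt_radialProfile (e := f) (t := ‖y‖)
    (hfy.symm ▸ hdiff.differentiableAt (isOpen_ball.mem_nhds hy))
  calc
    ‖deriv (radialProfile u e) ‖y‖‖ = ‖fderiv ℝ u y f‖ := by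
      rw [hu.deriv_radialProfile_eq he hf (by simpa using hy), hderiv.deriv, hfy]
    _ ≤ ‖fderiv ℝ u y‖ := (fderiv ℝ u y).unit_le_opNorm f hf.le

end IsRadialOn

end Radial

section Dirichlet

variable {F : Type*} [NormedAddCommGroup F] [NormedSpace ℝ F] [MeasurableSpace F] [BorelSpace F]

lemma setIntegral_ball_fun_norm_addHaar {G : Type*} [NormedAddCommGroup G] [NormedSpace ℝ G]
    [FiniteDimensional ℝ F] [Nontrivial F] (μ : Measure F) [μ.IsAddHaarMeasure] (g : ℝ → G)
    (R : ℝ) :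
    ∫ y in ball (0 : F) R, g ‖y‖ ∂μ =
      finrank ℝ F • μ.real (ball 0 1) • ∫ r in Ioo 0 R, r ^ (finrank ℝ F - 1) • g r := by
  calc
    ∫ y in ball (0 : F) R, g ‖y‖ ∂μ = ∫ y, (Iio R).indicator g ‖y‖ ∂μ := by
      rw [← integral_indicator measurableSet_ball]
      refine integral_congr_ae (ae_of_all _ fun y ↦ ?_)
      exact indicator_eq_indicator (by rw [mem_ball_zero_iff, mem_Iio]) rfl
    _ = finrank ℝ F • μ.real (ball 0 1) •
        ∫ r in Ioi 0, r ^ (finrank ℝ F - 1) • (Iio R).indicator g r :=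
      integral_fun_norm_addHaar μ _
    _ = _ := by
      simp_rw [← indicator_smul_apply (Iio R) (fun r ↦ r ^ (finrank ℝ F - 1)) g]
      rw [setIntegral_indicator measurableSet_Iio, Ioi_inter_Iio]

variable {G : Type*} [NormedAddCommGroup G] [NormedSpace ℝ G] {μ : Measure F} {u : F → G}
  {e x : F} {R : ℝ}

lemma integrableOn_norm_fderiv_pow_interior [IsFiniteMeasureOnCompacts μ] {K : Set F}
    (hu : ContDiffOn ℝ 1 u K) (hK : IsCompact K) (hK_diff : UniqueDiffOn ℝ K) (k : ℕ) :
    IntegrableOn (fun y ↦ ‖fderiv ℝ u y‖ ^ k) (interior K) μ := by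
  have hcont : ContinuousOn (fun y ↦ ‖fderivWithin ℝ u K y‖ ^ k) K :=
    (hu.continuousOn_fderivWithin hK_diff le_rfl).norm.pow k
  refine ((hcont.integrableOn_compact hK).mono_set interior_subset).congr_fun (fun y hy ↦ ?_)
    isOpen_interior.measurableSet
  simp only [fderivWithin_of_mem_nhds (mem_interior_iff_mem_nhds.1 hy)]

lemma integrableOn_norm_fderiv_pow_ball [FiniteDimensional ℝ F] [IsFiniteMeasureOnCompacts μ]
    (hu : ContDiffOn ℝ 1 u (closedBall 0 R)) (hR : R ≠ 0) (k : ℕ) :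
    IntegrableOn (fun y ↦ ‖fderiv ℝ u y‖ ^ k) (ball 0 R) μ := by
  rcases (ball (0 : F) R).eq_empty_or_nonempty with hempty | hne
  · simp only [hempty, integrableOn_empty]
  rw [← interior_closedBall 0 hR] at hne ⊢
  have : ProperSpace F := FiniteDimensional.proper_real F
  exact integrableOn_norm_fderiv_pow_interior hu (isCompact_closedBall 0 R)
    (uniqueDiffOn_convex (convex_closedBall 0 R) hne) k

variable [CompleteSpace G]

namespace IsRadialOn

lemma integrableOn_sq_norm_deriv_radialProfile (hrad : IsRadialOn u (ball 0 R))
    (hdiff : DifferentiableOn ℝ u (ball 0 R))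
    (h_int : IntegrableOn (fun y ↦ ‖fderiv ℝ u y‖ ^ 2) (ball 0 R) μ) (he : ‖e‖ = 1) :
    IntegrableOn (fun y ↦ ‖deriv (radialProfile u e) ‖y‖‖ ^ 2) (ball 0 R) μ := by
  have hmeas : StronglyMeasurable fun y : F ↦ ‖deriv (radialProfile u e) ‖y‖‖ ^ 2 :=
    ((stronglyMeasurable_deriv _).comp_measurable measurable_norm).norm.pow 2
  refine Integrable.mono' h_int hmeas.aestronglyMeasurable ?_
  filter_upwards [ae_restrict_mem measurableSet_ball] with y hy
  rw [Real.norm_of_nonneg (sq_nonneg _)]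
  gcongr
  exact hrad.norm_deriv_radialProfile_le hdiff he hy

variable [FiniteDimensional ℝ F] [μ.IsAddHaarMeasure]

lemma mul_integral_pow_mul_sq_norm_deriv_le [Nontrivial F] (hrad : IsRadialOn u (ball 0 R))
    (hdiff : DifferentiableOn ℝ u (ball 0 R))
    (h_int : IntegrableOn (fun y ↦ ‖fderiv ℝ u y‖ ^ 2) (ball 0 R) μ) (he : ‖e‖ = 1) :
    finrank ℝ F * μ.real (ball 0 1) *
        ∫ r in Ioo 0 R, r ^ (finrank ℝ F - 1) * ‖deriv (radialProfile u e) r‖ ^ 2 ≤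
      ∫ y in ball 0 R, ‖fderiv ℝ u y‖ ^ 2 ∂μ := by
  calc
    _ = ∫ y in ball 0 R, ‖deriv (radialProfile u e) ‖y‖‖ ^ 2 ∂μ := by
      rw [setIntegral_ball_fun_norm_addHaar μ fun r ↦ ‖deriv (radialProfile u e) r‖ ^ 2]
      simp only [nsmul_eq_mul, smul_eq_mul, mul_assoc]
    _ ≤ ∫ y in ball 0 R, ‖fderiv ℝ u y‖ ^ 2 ∂μ := by
      refine setIntegral_mono_on (hrad.integrableOn_sq_norm_deriv_radialProfile hdiff h_int he)
        h_int measurableSet_ball fun y hy ↦ ?_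
      gcongr
      exact hrad.norm_deriv_radialProfile_le hdiff he hy

lemma mul_rpow_mul_sq_norm_le_integral_pow_mul_sq_norm_deriv (hdim : 3 ≤ finrank ℝ F)
    (hrad : IsRadialOn u (ball 0 R)) (hcont : ContinuousOn u (closedBall 0 R))
    (hdiff : DifferentiableOn ℝ u (ball 0 R)) (hbd : ∀ y, ‖y‖ = R → u y = 0)
    (h_int : IntegrableOn (fun y ↦ ‖fderiv ℝ u y‖ ^ 2) (ball 0 R) μ) (he : ‖e‖ = 1)
    {ρ : ℝ} (hρ : 0 < ρ) (hρR : ρ ≤ R) :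
    (finrank ℝ F - 2) * ρ ^ (finrank ℝ F - 2 : ℝ) * ‖u (ρ • e)‖ ^ 2 ≤
      ∫ r in Ioo 0 R, r ^ (finrank ℝ F - 1) * ‖deriv (radialProfile u e) r‖ ^ 2 := by
  set n := finrank ℝ F
  set w := radialProfile u e
  have : Nontrivial F := nontrivial_of_finrank_pos (R := ℝ) (by omega)
  have cast_pred : ((n - 1 : ℕ) : ℝ) - 1 = n - 2 := by
    rw [Nat.cast_pred (by omega)]
    ring
  have one_lt : (1 : ℝ) < (n - 1 : ℕ) := by exact_mod_cast (by omega : 1 < n - 1)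
  have profile_cont : ContinuousOn w (Icc ρ R) :=
    (continuousOn_radialProfile hcont he).mono (Icc_subset_Icc_left (by linarith))
  have profile_diff : DifferentiableOn ℝ w (Ioo ρ R) :=
    (differentiableOn_radialProfile hdiff he).mono (Ioo_subset_Ioo_left (by linarith))
  have profile_R : w R = 0 :=
    hbd _ (by rw [norm_smul_of_norm_eq_one he, abs_of_nonneg (hρ.le.trans hρR)])
  have energy_int : IntegrableOn (fun r ↦ r ^ (n - 1) * ‖deriv w r‖ ^ 2) (Ioo 0 R) :=
    (integrableOn_fun_norm_addHaar μ).1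
      (hrad.integrableOn_sq_norm_deriv_radialProfile hdiff h_int he)
  have Ioo_subset : Ioo ρ R ⊆ Ioo 0 R := Ioo_subset_Ioo_left hρ.le
  calc
    (n - 2) * ρ ^ (n - 2 : ℝ) * ‖w ρ‖ ^ 2 ≤ ∫ r in Ioo ρ R, r ^ (n - 1) * ‖deriv w r‖ ^ 2 := by
      simpa only [cast_pred, Real.rpow_natCast] using
        mul_rpow_mul_sq_norm_le_integral_rpow_mul_sq_norm_deriv one_lt hρ hρR profile_cont
          profile_diff profile_R
          (by simpa only [Real.rpow_natCast] using energy_int.mono_set Ioo_subset)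
    _ ≤ ∫ r in Ioo 0 R, r ^ (n - 1) * ‖deriv w r‖ ^ 2 := by
      refine setIntegral_mono_set energy_int ?_ Ioo_subset.eventuallyLE
      filter_upwards [ae_restrict_mem measurableSet_Ioo] with r hr
      exact mul_nonneg (pow_nonneg hr.1.le _) (sq_nonneg _)

end IsRadialOn

theorem stmt3_general (μ : Measure F) [FiniteDimensional ℝ F] [μ.IsAddHaarMeasure]
    (hdim : 3 ≤ finrank ℝ F) (hcont : ContinuousOn u (closedBall 0 R))
    (hdiff : DifferentiableOn ℝ u (ball 0 R))
    (h_int : IntegrableOn (fun y ↦ ‖fderiv ℝ u y‖ ^ 2) (ball 0 R) μ)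
    (hrad : IsRadialOn u (ball 0 R)) (hbd : ∀ y, ‖y‖ = R → u y = 0)
    (hx : x ∈ closedBall 0 R) (hx0 : x ≠ 0) :
    ‖u x‖ ≤ √(∫ y in ball 0 R, ‖fderiv ℝ u y‖ ^ 2 ∂μ) /
      (√(finrank ℝ F * μ.real (ball 0 1) * (finrank ℝ F - 2)) *
        ‖x‖ ^ ((finrank ℝ F - 2 : ℝ) / 2)) := by
  have : Nontrivial F := ⟨x, 0, hx0⟩
  set n := finrank ℝ F
  set ω := n * μ.real (ball (0 : F) 1)
  set e := ‖x‖⁻¹ • x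
  have he : ‖e‖ = 1 := norm_smul_inv_norm (𝕜 := ℝ) hx0
  have hρ : 0 < ‖x‖ := norm_pos_iff.2 hx0
  have polar_form : ‖x‖ • e = x := smul_inv_smul₀ hρ.ne' x
  have two_lt : (2 : ℝ) < n := by exact_mod_cast hdim
  have ω_pos : 0 < ω := mul_pos (by linarith) (ENNReal.toReal_pos
    (measure_ball_pos μ 0 one_pos).ne' measure_ball_lt_top.ne)
  have const_pos : 0 < ω * (n - 2) := mul_pos ω_pos (sub_pos.2 two_lt)
  have sq_rpow_half : (‖x‖ ^ ((n - 2 : ℝ) / 2)) ^ 2 = ‖x‖ ^ (n - 2 : ℝ) := by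
    rw [← Real.rpow_mul_natCast hρ.le, Nat.cast_two, div_mul_cancel₀ _ two_ne_zero]
  rw [le_div_iff₀ (by positivity)]
  apply Real.le_sqrt_of_sq_le
  calc
    (‖u x‖ * (√(ω * (n - 2)) * ‖x‖ ^ ((n - 2 : ℝ) / 2))) ^ 2
      = ω * ((n - 2) * ‖x‖ ^ (n - 2 : ℝ) * ‖u (‖x‖ • e)‖ ^ 2) := by
        rw [mul_pow, mul_pow, Real.sq_sqrt const_pos.le, sq_rpow_half, polar_form]
        ring
    _ ≤ ω * ∫ r in Ioo 0 R, r ^ (n - 1) * ‖deriv (radialProfile u e) r‖ ^ 2 := by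
      gcongr
      exact hrad.mul_rpow_mul_sq_norm_le_integral_pow_mul_sq_norm_deriv hdim hcont hdiff hbd h_int
        he hρ (mem_closedBall_zero_iff.1 hx)
    _ ≤ ∫ y in ball 0 R, ‖fderiv ℝ u y‖ ^ 2 ∂μ :=
      hrad.mul_integral_pow_mul_sq_norm_deriv_le hdiff h_int he

end Dirichlet

/-- Ni's Radial Lemma: a C¹ radial function on the closed unit ball vanishing on the
boundary satisfies |u(x)| ≤ ‖∇u‖_{L²} / ((ω_N (N-2))^{1/2} |x|^{(N-2)/2}). -/
theorem stmt3 {N : ℕ} (hN : 3 ≤ N) (u : E N → ℝ)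
    (hu : ContDiffOn ℝ 1 u (closedBall 0 1))
    (hrad : ∀ x y : E N, ‖x‖ = ‖y‖ → u x = u y)
    (hbd : ∀ x : E N, ‖x‖ = 1 → u x = 0)
    (x : E N) (hx : x ∈ closedBall (0 : E N) 1) (hx0 : x ≠ 0) :
    |u x| ≤ Real.sqrt (∫ y in ball (0 : E N) 1, ‖gradient u y‖ ^ 2) /
      (Real.sqrt (((N : ℝ) * (volume (ball (0 : E N) 1)).toReal) * ((N : ℝ) - 2)) *
        ‖x‖ ^ (((N : ℝ) - 2) / 2)) := by
  simpa [gradient, Measure.real] using stmt3_general volume (by simpa using hN) hu.continuousOn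
    ((hu.differentiableOn one_ne_zero).mono ball_subset_closedBall)
    (integrableOn_norm_fderiv_pow_ball hu one_ne_zero 2) (fun x _ y _ h ↦ hrad x y h) hbd hx hx0
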